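/- Let $f: \mathbb{R}^3 \to \mathbb{C}$ be as above ($C_0^n$ on $\mathbb{R}^3\setminus\{0\}$ with compact support away from $0$) and set $I(x,t) := \int_{\mathbb{R}^3} e^{i\alpha k \cdot x - it|k|} f(k)\,d^3k$ for $\alpha \ge 0$. Then there exists $c_n$ such that for all $x \in \mathbb{R}^3$ and $t \in \mathbb{R}$, $|I(x,t)| \le c_n \frac{1 + (\alpha|x|)^n}{1 + |t|^n}$. -/

import Mathlib

open MeasureTheory
open scoped RealInnerProductSpace

/-- Euler-field integration by parts: `∫ (k·∇)h = -3 ∫ h`. -/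
lemma euler_integral (h : EuclideanSpace ℝ (Fin 3) → ℂ) (hc : ContDiff ℝ 1 h)
    (hs : HasCompactSupport h) :
    ∫ k, fderiv ℝ h k k = -3 * ∫ k, h k := by
  have hfc : Continuous (fderiv ℝ h) := hc.continuous_fderiv (by simp)
  have hint : Integrable h := hc.continuous.integrable_of_hasCompactSupport hs
  have hint2 : ∀ i : Fin 3, Integrable (fun k : EuclideanSpace ℝ (Fin 3) =>
      (k i) • fderiv ℝ h k (EuclideanSpace.single i (1 : ℝ))) := by
    intro i
    apply Continuous.integrable_of_hasCompactSupport
    · fun_prop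
    · refine (hs.fderiv ℝ).mono ?_
      intro k hk hz
      apply hk
      simp [hz]
  have key : ∀ i : Fin 3, ∫ k : EuclideanSpace ℝ (Fin 3),
      (k i) • fderiv ℝ h k (EuclideanSpace.single i (1 : ℝ)) = - ∫ k, h k := by
    intro i
    have := integral_bilinear_hasFDerivAt_right_eq_neg_left_of_integrable
      (μ := (volume : Measure (EuclideanSpace ℝ (Fin 3))))
      (f := fun k : EuclideanSpace ℝ (Fin 3) => k i)
      (f' := fun _ => (EuclideanSpace.proj i : EuclideanSpace ℝ (Fin 3) →L[ℝ] ℝ))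
      (g := h) (g' := fderiv ℝ h) (v := EuclideanSpace.single i (1 : ℝ))
      (B := ContinuousLinearMap.lsmul ℝ ℝ)
      (by simpa using hint) (by simpa using hint2 i)
      (by
        apply Continuous.integrable_of_hasCompactSupport
        · have := hc.continuous
          simp only [ContinuousLinearMap.lsmul_apply]
          fun_prop
        · simp only [ContinuousLinearMap.lsmul_apply]
          refine hs.mono ?_
          intro k hk hz
          apply hk
          simp [hz])
      (fun x _ => (EuclideanSpace.proj i : EuclideanSpace ℝ (Fin 3) →L[ℝ] ℝ).hasFDerivAt)
      (fun x _ => (hc.differentiable (by simp) x).hasFDerivAt)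
    simpa using this
  have hsum : ∀ k : EuclideanSpace ℝ (Fin 3), fderiv ℝ h k k =
      ∑ i : Fin 3, (k i) • fderiv ℝ h k (EuclideanSpace.single i (1 : ℝ)) := by
    intro k
    have hk : k = ∑ i : Fin 3, (k i) • EuclideanSpace.single i (1 : ℝ) := by
      ext j
      fin_cases j <;> simp [Fin.sum_univ_three]
    have hh := congrArg (fderiv ℝ h k) hk
    rw [map_sum] at hh
    simpa only [map_smul] using hh
  simp_rw [hsum]
  rw [integral_finsetSum _ (fun i _ => hint2 i)]
  simp only [key]
  simp

/-- The phase. -/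
noncomputable def phs (y : EuclideanSpace ℝ (Fin 3)) (t : ℝ) (k : EuclideanSpace ℝ (Fin 3)) : ℝ :=
  ⟪k, y⟫ - t * ‖k‖

lemma phs_lower (y : EuclideanSpace ℝ (Fin 3)) (t : ℝ) (h : 2 * ‖y‖ ≤ |t|)
    (k : EuclideanSpace ℝ (Fin 3)) : |t| / 2 * ‖k‖ ≤ |phs y t k| := by
  unfold phs
  have h1 := abs_real_inner_le_norm k y
  have h2 : |t * ‖k‖| = |t| * ‖k‖ := by rw [abs_mul, abs_norm]
  have h3 := abs_sub_abs_le_abs_sub (t * ‖k‖) ⟪k, y⟫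
  rw [abs_sub_comm] at h3
  nlinarith [norm_nonneg k]

lemma phs_smul (y : EuclideanSpace ℝ (Fin 3)) (t : ℝ) (k : EuclideanSpace ℝ (Fin 3)) (s : ℝ)
    (hs : 0 < s) : phs y t (s • k) = s * phs y t k := by
  unfold phs
  rw [real_inner_smul_left, norm_smul, Real.norm_of_nonneg hs.le]
  ring

/-- amplitude function -/
noncomputable def amp (y : EuclideanSpace ℝ (Fin 3)) (t : ℝ) (m : ℕ)
    (g : EuclideanSpace ℝ (Fin 3) → ℂ) (k : EuclideanSpace ℝ (Fin 3)) : ℂ :=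
  Complex.exp ((phs y t k : ℂ) * Complex.I) * ((phs y t k : ℂ) ^ m)⁻¹ * g k

lemma amp_tsupport (y : EuclideanSpace ℝ (Fin 3)) (t : ℝ) (m : ℕ)
    (g : EuclideanSpace ℝ (Fin 3) → ℂ) : tsupport (amp y t m g) ⊆ tsupport g := by
  apply closure_mono
  intro k hk hg
  apply hk
  simp [amp, hg]

lemma phs_ne (y : EuclideanSpace ℝ (Fin 3)) (t : ℝ) (h : 2 * ‖y‖ ≤ |t|) (ht : t ≠ 0)
    (k : EuclideanSpace ℝ (Fin 3)) (hk : k ≠ 0) : phs y t k ≠ 0 := by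
  have := phs_lower y t h k
  have h1 : 0 < |t| := abs_pos.mpr ht
  have h2 : 0 < ‖k‖ := norm_pos_iff.mpr hk
  have : 0 < |phs y t k| := lt_of_lt_of_le (by positivity) this
  exact abs_pos.mp this

lemma amp_contDiff (N : ℕ) (y : EuclideanSpace ℝ (Fin 3)) (t : ℝ) (m : ℕ)
    (g : EuclideanSpace ℝ (Fin 3) → ℂ) (hg : ContDiff ℝ N g)
    (h0 : (0 : EuclideanSpace ℝ (Fin 3)) ∉ tsupport g)
    (h : 2 * ‖y‖ ≤ |t|) (ht : t ≠ 0) : ContDiff ℝ N (amp y t m g) := by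
  rw [contDiff_iff_contDiffAt]
  intro k
  by_cases hk : k ∈ tsupport g
  · have hk0 : k ≠ 0 := fun h => h0 (h ▸ hk)
    have hp : ContDiffAt ℝ N (phs y t) k := by
      unfold phs
      exact (contDiffAt_id.inner ℝ contDiffAt_const).sub
        (contDiffAt_const.mul (contDiffAt_id.norm ℝ hk0))
    have hp' : ContDiffAt ℝ N (fun k => (phs y t k : ℂ)) k :=
      Complex.ofRealCLM.contDiff.contDiffAt.comp k hp
    have hne : (phs y t k : ℂ) ≠ 0 := by exact_mod_cast phs_ne y t h ht k hk0
    unfold amp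
    exact ((hp'.mul contDiffAt_const).cexp.mul ((hp'.pow m).inv (pow_ne_zero _ hne))).mul
      hg.contDiffAt
  · have : k ∉ tsupport (amp y t m g) := fun hh => hk (amp_tsupport y t m g hh)
    have h2 := notMem_tsupport_iff_eventuallyEq.mp this
    exact contDiffAt_const.congr_of_eventuallyEq h2

lemma amp_euler (y : EuclideanSpace ℝ (Fin 3)) (t : ℝ) (m : ℕ)
    (g : EuclideanSpace ℝ (Fin 3) → ℂ) (hg : ContDiff ℝ 1 g)
    (h0 : (0 : EuclideanSpace ℝ (Fin 3)) ∉ tsupport g)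
    (h : 2 * ‖y‖ ≤ |t|) (ht : t ≠ 0) (k : EuclideanSpace ℝ (Fin 3)) :
    fderiv ℝ (amp y t (m + 1) g) k k =
      Complex.I * amp y t m g k - (m + 1) * amp y t (m + 1) g k
        + amp y t (m + 1) (fun k => fderiv ℝ g k k) k := by
  by_cases hk : k ∈ tsupport g
  · have hk0 : k ≠ 0 := fun h => h0 (h ▸ hk)
    have hne : (phs y t k : ℂ) ≠ 0 := by exact_mod_cast phs_ne y t h ht k hk0
    have hd : DifferentiableAt ℝ (amp y t (m + 1) g) k :=
      ((amp_contDiff 1 y t (m + 1) g (by exact_mod_cast hg) h0 h ht).differentiable (by simp)) k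
    have hray : HasDerivAt (fun s : ℝ => s • k) k 1 := by
      simpa using (hasDerivAt_id (1 : ℝ)).smul_const k
    have h1 : HasDerivAt (fun s : ℝ => amp y t (m + 1) g (s • k))
        (fderiv ℝ (amp y t (m + 1) g) k k) 1 := by
      have : HasFDerivAt (amp y t (m + 1) g) (fderiv ℝ (amp y t (m + 1) g) k) ((1 : ℝ) • k) := by
        rw [one_smul]; exact hd.hasFDerivAt
      exact this.comp_hasDerivAt 1 hray
    have h2 : HasDerivAt (fun s : ℝ => g (s • k)) (fderiv ℝ g k k) 1 := by
      have : HasFDerivAt g (fderiv ℝ g k) ((1 : ℝ) • k) := by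
        rw [one_smul]; exact (hg.differentiable (by simp) k).hasFDerivAt
      exact this.comp_hasDerivAt 1 hray
    set p : ℂ := (phs y t k : ℂ) with hp
    have h3 : HasDerivAt (fun s : ℝ => (s : ℂ) * p) p 1 := by
      simpa using (Complex.ofRealCLM.hasDerivAt (x := (1 : ℝ))).mul_const p
    have h4 : HasDerivAt (fun s : ℝ => Complex.exp ((s : ℂ) * p * Complex.I) *
        (((s : ℂ) * p) ^ (m + 1))⁻¹ * g (s • k)) _ 1 :=
      ((h3.mul_const Complex.I).cexp.mul ((h3.pow (m + 1)).inv (by simpa using hne))).mul h2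
    have h5 : (fun s : ℝ => amp y t (m + 1) g (s • k)) =ᶠ[nhds 1]
        (fun s : ℝ => Complex.exp ((s : ℂ) * p * Complex.I) *
        (((s : ℂ) * p) ^ (m + 1))⁻¹ * g (s • k)) := by
      filter_upwards [lt_mem_nhds (show (0 : ℝ) < 1 by norm_num)] with s hs
      simp only [amp, phs_smul y t k s hs, hp]
      push_cast
      rfl
    rw [h1.unique (h4.congr_of_eventuallyEq h5)]
    simp only [amp, ← hp]
    simp
    field_simp
    ring
  · have h1 : k ∉ tsupport (amp y t (m + 1) g) := fun hh => hk (amp_tsupport y t _ g hh)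
    have h2 : fderiv ℝ (amp y t (m + 1) g) k = 0 := by
      rw [(notMem_tsupport_iff_eventuallyEq.mp h1).fderiv_eq]
      simp
    have h3 : fderiv ℝ g k = 0 := by
      rw [(notMem_tsupport_iff_eventuallyEq.mp hk).fderiv_eq]
      simp
    have h4 : g k = 0 := image_eq_zero_of_notMem_tsupport hk
    simp [h2, amp, h3, h4]

lemma main_decay (n : ℕ) : ∀ (m : ℕ) (g : EuclideanSpace ℝ (Fin 3) → ℂ),
    ContDiff ℝ n g → HasCompactSupport g → (0 : EuclideanSpace ℝ (Fin 3)) ∉ tsupport g →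
    ∃ C : ℝ, ∀ (y : EuclideanSpace ℝ (Fin 3)) (t : ℝ), 2 * ‖y‖ ≤ |t| → t ≠ 0 →
      ‖∫ k, amp y t m g k‖ * |t| ^ (m + n) ≤ C := by
  induction n with
  | zero =>
    intro m g hg hs h0
    obtain ⟨δ, hδ, hball⟩ : ∃ δ > 0, ∀ k, g k ≠ 0 → δ ≤ ‖k‖ := by
      have : (tsupport g)ᶜ ∈ nhds (0 : EuclideanSpace ℝ (Fin 3)) :=
        (isClosed_tsupport g).isOpen_compl.mem_nhds h0
      obtain ⟨δ, hδ, hb⟩ := Metric.mem_nhds_iff.mp this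
      refine ⟨δ, hδ, fun k hk => ?_⟩
      by_contra hlt
      push Not at hlt
      exact hb (by simpa using hlt) (subset_tsupport g hk)
    refine ⟨(2 / δ) ^ m * ∫ k, ‖g k‖, fun y t h ht => ?_⟩
    have htp : 0 < |t| := abs_pos.mpr ht
    have hb : ‖∫ k, amp y t m g k‖ ≤ ∫ k, (2 / δ / |t|) ^ m * ‖g k‖ := by
      apply norm_integral_le_of_norm_le
      · exact (hg.continuous.integrable_of_hasCompactSupport hs).norm.const_mul _
      · refine Filter.Eventually.of_forall fun k => ?_
        by_cases hk : g k = 0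
        · simp [amp, hk]
        · simp only [amp, norm_mul, Complex.norm_exp_ofReal_mul_I, one_mul, norm_inv, norm_pow,
            Complex.norm_real, Real.norm_eq_abs]
          gcongr
          rw [← inv_pow]
          gcongr
          have h1 := phs_lower y t h k
          have h2 := hball k hk
          have h3 : |t| / 2 * δ ≤ |phs y t k| := le_trans (by gcongr) h1
          calc |phs y t k|⁻¹ ≤ (|t| / 2 * δ)⁻¹ := by gcongr
            _ = 2 / δ / |t| := by field_simp
    rw [integral_const_mul] at hb
    calc _ ≤ ((2 / δ / |t|) ^ m * ∫ k, ‖g k‖) * |t| ^ (m + 0) := by gcongr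
      _ = _ := by
        rw [add_zero, div_pow _ |t|]
        field_simp
  | succ n ih =>
    intro m g hg hs h0
    have hg1 : ContDiff ℝ 1 g := hg.of_le (by simp)
    have hg' : ContDiff ℝ n (fun k => fderiv ℝ g k k) :=
      (hg.fderiv_right (m := n) (by simp)).clm_apply contDiff_id
    set G : EuclideanSpace ℝ (Fin 3) → ℂ := fun k => fderiv ℝ g k k + (2 - m : ℂ) * g k with hG
    have hGc : ContDiff ℝ n G := hg'.add (contDiff_const.mul (hg.of_le (by simp)))
    have hGs : tsupport G ⊆ tsupport g := by
      apply closure_minimal _ (isClosed_tsupport g)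
      intro k hk
      by_contra hkk
      apply hk
      have h3 : fderiv ℝ g k = 0 := by
        rw [(notMem_tsupport_iff_eventuallyEq.mp hkk).fderiv_eq]
        simp
      simp [hG, h3, image_eq_zero_of_notMem_tsupport hkk]
    obtain ⟨C, hC⟩ := ih (m + 1) G hGc (hs.mono' (subset_tsupport _ |>.trans hGs))
      (fun hh => h0 (hGs hh))
    refine ⟨C, fun y t h ht => ?_⟩
    have hint : ∀ (M : ℕ) (u : EuclideanSpace ℝ (Fin 3) → ℂ), Continuous u →
        tsupport u ⊆ tsupport g → Integrable (amp y t M u) := by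
      intro M u hu hsu
      have hcu : HasCompactSupport u := hs.mono' (subset_tsupport _ |>.trans hsu)
      apply Continuous.integrable_of_hasCompactSupport
      · exact (amp_contDiff 0 y t M u (by simpa using (contDiff_zero (𝕜 := ℝ)).mpr hu)
          (fun hh => h0 (hsu hh)) h ht).continuous
      · exact hcu.mono' (subset_tsupport _ |>.trans (amp_tsupport y t M u))
    have hi1 := hint m g hg.continuous subset_rfl
    have hi3 := hint (m + 1) G hGc.continuous hGs
    have he := euler_integral (amp y t (m + 1) g)
      (by exact_mod_cast amp_contDiff 1 y t (m + 1) g (by exact_mod_cast hg1) h0 h ht)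
      (hs.mono' (subset_tsupport _ |>.trans (amp_tsupport y t _ g)))
    have hi2 := hint (m + 1) g hg.continuous subset_rfl
    have hrw : ∀ k, fderiv ℝ (amp y t (m + 1) g) k k =
        Complex.I * amp y t m g k + amp y t (m + 1) G k - 3 * amp y t (m + 1) g k := by
      intro k
      rw [amp_euler y t m g hg1 h0 h ht k]
      simp only [amp, hG]
      ring
    simp_rw [hrw] at he
    have hi4 : Integrable (fun k => Complex.I * amp y t m g k + amp y t (m + 1) G k) :=
      (hi1.const_mul _).add hi3
    rw [integral_sub hi4 (hi2.const_mul _),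
      integral_add (hi1.const_mul _) hi3, integral_const_mul, integral_const_mul] at he
    have he2 : Complex.I * ∫ k, amp y t m g k = - ∫ k, amp y t (m + 1) G k := by
      linear_combination he
    have he3 : ‖∫ k, amp y t m g k‖ = ‖∫ k, amp y t (m + 1) G k‖ := by
      have := congrArg norm he2
      simpa using this
    rw [he3]
    have := hC y t h ht
    rwa [show m + 1 + n = m + (n + 1) by ring] at this

/-- the stationary-phase estimate (3.2). For `f : ℝ³ → ℂ` of class `C₀ⁿ`
away from the origin with compact support avoiding `0`, and `α ≥ 0`, the integral
`I(x,t) = ∫ e^{i α k·x - i t |k|} f(k) dk` satisfies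
`|I(x,t)| ≤ c_n (1 + (α|x|)ⁿ)/(1 + |t|ⁿ)` for all `x` and `t`. -/
theorem stationary_phase_dipole_estimate
    (n : ℕ) (f : EuclideanSpace ℝ (Fin 3) → ℂ)
    (hf : Continuous f) (hsupp : HasCompactSupport f)
    (h0 : (0 : EuclideanSpace ℝ (Fin 3)) ∉ tsupport f)
    (hdiff : ContDiffOn ℝ n f {(0 : EuclideanSpace ℝ (Fin 3))}ᶜ)
    (α : ℝ) (hα : 0 ≤ α) :
    ∃ c : ℝ, ∀ (x : EuclideanSpace ℝ (Fin 3)) (t : ℝ),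
      ‖∫ k : EuclideanSpace ℝ (Fin 3),
          Complex.exp (Complex.I * ((α * ⟪k, x⟫ : ℝ) : ℂ) - Complex.I * (t : ℂ) * (‖k‖ : ℂ))
            * f k‖
        ≤ c * ((1 + (α * ‖x‖) ^ n) / (1 + |t| ^ n)) := by
  have hcd : ContDiff ℝ n f := by
    rw [contDiff_iff_contDiffAt]
    intro k
    by_cases hk : k = 0
    · subst hk
      exact contDiffAt_const.congr_of_eventuallyEq (notMem_tsupport_iff_eventuallyEq.mp h0)
    · exact hdiff.contDiffAt (isOpen_compl_singleton.mem_nhds hk)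
  obtain ⟨C, hC⟩ := main_decay n 0 f hcd hsupp h0
  set C0 : ℝ := ∫ k, ‖f k‖ with hC0
  have hC0n : 0 ≤ C0 := integral_nonneg fun k => norm_nonneg _
  refine ⟨2 ^ n * C0 + 2 * C0 + |C|, fun x t => ?_⟩
  have hI : ∀ k : EuclideanSpace ℝ (Fin 3),
      Complex.exp (Complex.I * ((α * ⟪k, x⟫ : ℝ) : ℂ) - Complex.I * (t : ℂ) * (‖k‖ : ℂ)) * f k
        = amp (α • x) t 0 f k := by
    intro k
    simp only [amp, phs, real_inner_smul_right, pow_zero, inv_one, mul_one]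
    congr 2
    push_cast
    ring
  simp_rw [hI]
  have hb0 : ‖∫ k, amp (α • x) t 0 f k‖ ≤ C0 := by
    apply norm_integral_le_of_norm_le (hf.integrable_of_hasCompactSupport hsupp).norm
    refine Filter.Eventually.of_forall fun k => ?_
    simp only [amp, norm_mul, Complex.norm_exp_ofReal_mul_I, one_mul, pow_zero, inv_one, norm_one,
      le_refl]
  set J := ‖∫ k, amp (α • x) t 0 f k‖ with hJ
  have hJn : 0 ≤ J := norm_nonneg _
  have hny : ‖α • x‖ = α * ‖x‖ := by rw [norm_smul, Real.norm_of_nonneg hα]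
  set r := α * ‖x‖ with hr
  have hrn : 0 ≤ r := by positivity
  have hrp : 0 ≤ r ^ n := by positivity
  have htn : 0 ≤ |t| ^ n := by positivity
  rw [← mul_div_assoc, le_div_iff₀ (by positivity)]
  have h2n : (1 : ℝ) ≤ 2 ^ n := one_le_pow₀ (by norm_num)
  have hCn := abs_nonneg C
  have hK : 0 ≤ 2 ^ n * C0 := by positivity
  by_cases hcase : 2 * r ≤ |t|
  · by_cases ht : t = 0
    · have : |t| ^ n ≤ 1 := pow_le_one₀ (abs_nonneg _) (by simp [ht])
      calc J * (1 + |t| ^ n) ≤ C0 * 2 := by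
            apply mul_le_mul hb0 (by linarith) (by linarith) hC0n
        _ ≤ (2 ^ n * C0 + 2 * C0 + |C|) * 1 := by linarith
        _ ≤ _ := by gcongr; linarith
    · have h1 := hC (α • x) t (by rw [hny]; exact hcase) ht
      rw [zero_add] at h1
      calc J * (1 + |t| ^ n) = J + J * |t| ^ n := by ring
        _ ≤ C0 + |C| := by linarith [le_abs_self C]
        _ ≤ (2 ^ n * C0 + 2 * C0 + |C|) * 1 := by linarith
        _ ≤ _ := by gcongr; linarith
  · push Not at hcase
    have h1 : |t| ^ n ≤ 2 ^ n * r ^ n := by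
      rw [← mul_pow]; gcongr
    calc J * (1 + |t| ^ n) ≤ C0 * (2 ^ n * (1 + r ^ n)) := by
          apply mul_le_mul hb0 (by linarith) (by linarith) hC0n
      _ = (2 ^ n * C0) * (1 + r ^ n) := by ring
      _ ≤ _ := by gcongr; linarith
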